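/- arXiv:2303.10744 — 2 statements merged into one kernel-verified Lean document; each statement's English description precedes it below -/
import Mathlib

section
/- Let E be a directed graph with E^0 finite and K an arbitrary field. The following statements are equivalent: (1) L_K(E) is commutative; (2) the maps r and s of E coincide and are injective; (3) E is a disjoint union of subgraphs each of which is either an isolated vertex or a single vertex with a single loop, the number of subgraphs being |E^0|; (4) L_K(E) ≅ K^n ⊕ (K[x, x^{-1}])^m as K-algebras, where m + n = |E^0|; (5) L_K(E)^× ≅ (K^×)^n × (K^× × ⟨x⟩)^m, where m + n = |E^0| and ⟨x⟩ is the infinite cyclic subgroup of K[x, x^{-1}]^× generated by x; (6) L_K(E)^× is an abelian group. -/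
/-!
The one substantial implication is that commuting units force the graph to consist of isolated
vertices and single loops. If `x² = y² = 0`, then `1 + x` and `1 + y` are units, so `x` and `y`
commute (`mul_comm_of_sq_zero`). For an edge `e` that is not a loop, `e² = (e^*)² = 0`, while
`e e^*` and `e^* e = r(e)` live at different vertices. For two distinct loops `e, f` at a vertex,
`e f^*` and `f e^*` square to zero and their products are `e e^*` and `f f^*`, which differ. Both
arguments work over every field, and both need that vertices are nonzero in `L_K(E)`
(`vtx_ne_zero`), which is shown by letting the algebra act on functions on `V × X` for a large
set `X`: a bijection `{e | s e = v} × X ≃ X` at each non-sink `v` makes the edges partial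
isometries satisfying all the relations, including the (CK2) relation at regular vertices.

Conversely, for a graph of isolated vertices and single loops, all generators commute
(`commute_of_loops`), and the vertices are orthogonal idempotents with sum `1` that cut `L_K(E)`
into a factor `K` for every isolated vertex and a factor `K[x, x⁻¹]` for every loop
(`exists_algEquiv`). The unit groups then follow from the fact that the units of `K[x, x⁻¹]` are
the nonzero monomials (`laurentUnits`), which holds because `X` is prime in `K[X]`.
-/

noncomputable section
open scoped Classical
universe u

/-- `a` and `b` generate a free group of rank two, i.e. form a non-cyclic free subgroup. -/
def FreePair {G : Type*} [Group G] (a b : G) : Prop :=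
  Function.Injective (FreeGroup.lift ![a, b] : FreeGroup (Fin 2) →* G)

/-- A field is absolute (locally finite) if every finite subset generates a finite
subfield over the prime subfield. -/
def IsAbsoluteField (K : Type*) [Field K] : Prop :=
  ∀ S : Finset K, ((Subfield.closure (S : Set K) : Subfield K) : Set K).Finite

/-- `a` is transcendental over the prime subfield of `K`. -/
def TranscendentalOverPrime (K : Type*) [Field K] (a : K) : Prop :=
  ∀ p : Polynomial ℤ, Polynomial.aeval a p = 0 → p.map (Int.castRingHom K) = 0

/-- `a` and `b` are algebraically independent over the prime subfield of `K`. -/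
def AlgIndepOverPrime (K : Type*) [Field K] (a b : K) : Prop :=
  ∀ p : MvPolynomial (Fin 2) ℤ, MvPolynomial.aeval ![a, b] p = 0 →
    MvPolynomial.map (Int.castRingHom K) p = 0

/-- A two-sided ideal is (left) primitive if it is the annihilator of a simple left module. -/
def IsPrimitiveIdeal {R : Type u} [Ring R] (P : TwoSidedIdeal R) : Prop :=
  ∃ (M : Type u) (_ : AddCommGroup M) (_ : Module R M),
    IsSimpleModule R M ∧ ∀ x : R, x ∈ P ↔ ∀ m : M, x • m = 0

namespace LPA

/-- Generators of Cohn/Leavitt path algebras: vertices, edges and ghost edges. -/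
inductive Gen (V : Type*) (E : Type*)
  | vertex : V → Gen V E
  | edge : E → Gen V E
  | ghost : E → Gen V E

section rels

variable (K : Type*) [Field K] {V E : Type*} (s r : E → V)

/-- The defining relations (V), (E1), (E2), (CK1) of the Cohn path algebra of the graph
with vertex set `V`, edge set `E`, source map `s` and range map `r`; together with the
identification of `1` with the sum of all vertices when the vertex set is finite. -/
inductive CohnRel : FreeAlgebra K (Gen V E) → FreeAlgebra K (Gen V E) → Prop
  | vtx_mul (v w : V) :
      CohnRel (FreeAlgebra.ι K (Gen.vertex v) * FreeAlgebra.ι K (Gen.vertex w))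
        (if v = w then FreeAlgebra.ι K (Gen.vertex v) else 0)
  | edge_src (e : E) :
      CohnRel (FreeAlgebra.ι K (Gen.vertex (s e)) * FreeAlgebra.ι K (Gen.edge e))
        (FreeAlgebra.ι K (Gen.edge e))
  | edge_rng (e : E) :
      CohnRel (FreeAlgebra.ι K (Gen.edge e) * FreeAlgebra.ι K (Gen.vertex (r e)))
        (FreeAlgebra.ι K (Gen.edge e))
  | ghost_rng (e : E) :
      CohnRel (FreeAlgebra.ι K (Gen.vertex (r e)) * FreeAlgebra.ι K (Gen.ghost e))
        (FreeAlgebra.ι K (Gen.ghost e))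
  | ghost_src (e : E) :
      CohnRel (FreeAlgebra.ι K (Gen.ghost e) * FreeAlgebra.ι K (Gen.vertex (s e)))
        (FreeAlgebra.ι K (Gen.ghost e))
  | ck1 (e f : E) :
      CohnRel (FreeAlgebra.ι K (Gen.ghost e) * FreeAlgebra.ι K (Gen.edge f))
        (if e = f then FreeAlgebra.ι K (Gen.vertex (r e)) else 0)
  | unit [Fintype V] :
      CohnRel (1 : FreeAlgebra K (Gen V E)) (∑ v : V, FreeAlgebra.ι K (Gen.vertex v))

/-- The defining relations of the Leavitt path algebra: those of the Cohn path algebra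
together with the (CK2) relations at every regular vertex. -/
inductive LeavittRel : FreeAlgebra K (Gen V E) → FreeAlgebra K (Gen V E) → Prop
  | cohn {a b : FreeAlgebra K (Gen V E)} : CohnRel K s r a b → LeavittRel a b
  | ck2 (v : V) (hfin : {e : E | s e = v}.Finite) (hne : {e : E | s e = v}.Nonempty) :
      LeavittRel (FreeAlgebra.ι K (Gen.vertex v))
        (∑ e ∈ hfin.toFinset, FreeAlgebra.ι K (Gen.edge e) * FreeAlgebra.ι K (Gen.ghost e))

/-- The Cohn path algebra of the graph `(V, E, s, r)` with coefficients in `K`. -/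
abbrev CohnPathAlgebra := RingQuot (CohnRel K s r)

/-- The Leavitt path algebra of the graph `(V, E, s, r)` with coefficients in `K`. -/
abbrev LeavittPathAlgebra := RingQuot (LeavittRel K s r)

/-- The image of a vertex in the Leavitt path algebra. -/
def vtx (v : V) : LeavittPathAlgebra K s r :=
  RingQuot.mkAlgHom K (LeavittRel K s r) (FreeAlgebra.ι K (Gen.vertex v))

/-- The image of an edge in the Leavitt path algebra. -/
def edg (e : E) : LeavittPathAlgebra K s r :=
  RingQuot.mkAlgHom K (LeavittRel K s r) (FreeAlgebra.ι K (Gen.edge e))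

/-- The image of a ghost edge in the Leavitt path algebra. -/
def gh (e : E) : LeavittPathAlgebra K s r :=
  RingQuot.mkAlgHom K (LeavittRel K s r) (FreeAlgebra.ι K (Gen.ghost e))

end rels

section graph

variable {V E : Type*}

/-- `u ≥ v` : there is a (finite, possibly trivial) path from `u` to `v`. -/
def Reaches (s r : E → V) (u v : V) : Prop :=
  Relation.ReflTransGen (fun a b => ∃ e : E, s e = a ∧ r e = b) u v

/-- A sink emits no edges. -/
def IsSink (s : E → V) (v : V) : Prop := ∀ e : E, s e ≠ v

/-- An infinite emitter emits infinitely many edges. -/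
def IsInfiniteEmitter (s : E → V) (v : V) : Prop := {e : E | s e = v}.Infinite

/-- A regular vertex is neither a sink nor an infinite emitter. -/
def IsRegular (s : E → V) (v : V) : Prop :=
  (∃ e : E, s e = v) ∧ {e : E | s e = v}.Finite

/-- Hereditary subsets of vertices. -/
def IsHereditary (s r : E → V) (H : Set V) : Prop :=
  ∀ u ∈ H, ∀ v : V, Reaches s r u v → v ∈ H

/-- Saturated subsets of vertices. -/
def IsSaturated (s r : E → V) (H : Set V) : Prop :=
  ∀ v : V, IsRegular s v → (∀ e : E, s e = v → r e ∈ H) → v ∈ H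

/-- A breaking vertex of a hereditary saturated set `H`. -/
def IsBreakingVertex (s r : E → V) (H : Set V) (w : V) : Prop :=
  w ∉ H ∧ IsInfiniteEmitter s w ∧
    {e : E | s e = w ∧ r e ∉ H}.Finite ∧ {e : E | s e = w ∧ r e ∉ H}.Nonempty

/-- An infinite path, as a sequence of composable edges. -/
def IsInfPath (s r : E → V) (p : ℕ → E) : Prop := ∀ i, r (p i) = s (p (i + 1))

/-- Tail equivalence of infinite paths. -/
def TailEquiv (p q : ℕ → E) : Prop := ∃ m n : ℕ, ∀ i, p (m + i) = q (n + i)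

/-- Prepending an edge to an infinite path. -/
def consPath (f : E) (p : ℕ → E) : ℕ → E := fun i =>
  match i with
  | 0 => f
  | (j + 1) => p j

/-- A cycle of length `m`, encoded as the `m`-periodic infinite path obtained by
traversing it repeatedly; the sources of its first `m` edges are pairwise distinct. -/
def IsCycle (s r : E → V) (m : ℕ) (c : ℕ → E) : Prop :=
  0 < m ∧ IsInfPath s r c ∧ (∀ i, c (i + m) = c i) ∧
    ∀ i j, i < m → j < m → s (c i) = s (c j) → i = j

/-- A cycle (as a periodic infinite path) has no exits. -/
def CycleNoExit (s : E → V) (c : ℕ → E) : Prop :=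
  ∀ i, ∀ e : E, s e = s (c i) → e = c i

/-- An exclusive cycle: every cycle based at one of its vertices is a rotation of it. -/
def IsExclusiveCycle (s r : E → V) (m : ℕ) (c : ℕ → E) : Prop :=
  IsCycle s r m c ∧ ∀ (m' : ℕ) (c' : ℕ → E), IsCycle s r m' c' →
    (∃ i, s (c' 0) = s (c i)) → ∃ k, ∀ j, c' j = c (j + k)

/-- `l` is (the list of edges of) a finite path starting at the vertex `v`
(the empty list is the trivial path at `v`). -/
def IsPathFrom (s r : E → V) (v : V) (l : List E) : Prop :=
  l.Chain' (fun e f => r e = s f) ∧ ∀ h : l ≠ [], s (l.head h) = v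

/-- The terminal vertex of a finite path starting at `v`. -/
def pathEnd (r : E → V) (v : V) (l : List E) : V :=
  if h : l ≠ [] then r (l.getLast h) else v

end graph

section elements

variable (K : Type*) [Field K] {V E : Type*} (s r : E → V)

/-- The finite set of edges emitted by a breaking vertex `w` of `H` whose range is
outside `H` (junk value `∅` if that set of edges is infinite). -/
def breakingFinset (H : Set V) (w : V) : Finset E :=
  if h : {e : E | s e = w ∧ r e ∉ H}.Finite then h.toFinset else ∅

/-- The element `w^H = w - ∑_{s(e) = w, r(e) ∉ H} e e^*` of the Leavitt path algebra. -/
def wHElem (H : Set V) (w : V) : LeavittPathAlgebra K s r :=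
  vtx K s r w - ∑ e ∈ breakingFinset s r H w, edg K s r e * gh K s r e

/-- The ideal `I(H, S)` generated by the vertices in `H` and the elements `w^H`, `w ∈ S`. -/
def idealHS (H : Set V) (S : Set V) : TwoSidedIdeal (LeavittPathAlgebra K s r) :=
  TwoSidedIdeal.span ((fun v => vtx K s r v) '' H ∪ (fun w => wHElem K s r H w) '' S)

end elements

end LPA

/-- A (left) primitive ring: a ring admitting a faithful simple left module. -/
def IsPrimitiveRing (R : Type u) [Ring R] : Prop :=
  ∃ (M : Type u) (_ : AddCommGroup M) (_ : Module R M),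
    IsSimpleModule R M ∧ ∀ x : R, (∀ m : M, x • m = 0) → x = 0

namespace LPA

section conc

variable {V E : Type*}

/-- Reachability through paths all of whose vertices beyond the first lie outside `H`,
i.e. reachability in the quotient graph `E ∖ (H, B_H)`. -/
def ReachesOutside (s r : E → V) (H : Set V) (u v : V) : Prop :=
  Relation.ReflTransGen (fun a b => ∃ e : E, s e = a ∧ r e = b ∧ r e ∉ H) u v

variable (K : Type*) [Field K] (s r : E → V)

/-- The standard conclusion: for an edge `f`, in characteristic zero the elements
`a = 1 + α f^*`, `b = 1 + α f` (with `α = 2` or transcendental over the prime field)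
generate a non-cyclic free subgroup of `L_K(E)^×`, and in characteristic `t > 0` the
elements `c = a + (β - 1) s(f) + (β⁻¹ - 1) r(f)`, `d = b + (β - 1) s(f) + (β⁻¹ - 1) r(f)`
(with `α, β` algebraically independent over the prime field) do. -/
def FreeSubgroupFromEdge (f : E) : Prop :=
  ∀ α β : K,
    (CharP K 0 → (α = 2 ∨ TranscendentalOverPrime K α) →
      ∃ ua ub : (LeavittPathAlgebra K s r)ˣ,
        (ua : LeavittPathAlgebra K s r) =
            1 + algebraMap K (LeavittPathAlgebra K s r) α * gh K s r f ∧
        (ub : LeavittPathAlgebra K s r) =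
            1 + algebraMap K (LeavittPathAlgebra K s r) α * edg K s r f ∧
        FreePair ua ub) ∧
    (∀ t : ℕ, 0 < t → CharP K t → AlgIndepOverPrime K α β →
      ∃ uc ud : (LeavittPathAlgebra K s r)ˣ,
        (uc : LeavittPathAlgebra K s r) =
            1 + algebraMap K (LeavittPathAlgebra K s r) α * gh K s r f
              + algebraMap K (LeavittPathAlgebra K s r) (β - 1) * vtx K s r (s f)
              + algebraMap K (LeavittPathAlgebra K s r) (β⁻¹ - 1) * vtx K s r (r f) ∧
        (ud : LeavittPathAlgebra K s r) =
            1 + algebraMap K (LeavittPathAlgebra K s r) α * edg K s r f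
              + algebraMap K (LeavittPathAlgebra K s r) (β - 1) * vtx K s r (s f)
              + algebraMap K (LeavittPathAlgebra K s r) (β⁻¹ - 1) * vtx K s r (r f) ∧
        FreePair uc ud)

end conc

end LPA

namespace LPA

/-! ### Units of the Laurent polynomial ring -/

section laurent

open LaurentPolynomial

/-- Every unit of `K[x, x⁻¹]` over a field is a monomial: a unit and its inverse become
polynomials with product a power of `X` after multiplication by powers of `x`, and `X` is prime. -/
theorem exists_eq_C_mul_T {K : Type*} [Field K] (u : (LaurentPolynomial K)ˣ) :
    ∃ (a : Kˣ) (n : ℤ), (u : LaurentPolynomial K) = C (a : K) * T n := by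
  obtain ⟨n, f, hf⟩ := LaurentPolynomial.exists_T_pow (u : LaurentPolynomial K)
  obtain ⟨m, g, hg⟩ := LaurentPolynomial.exists_T_pow ((u⁻¹ : (LaurentPolynomial K)ˣ) : LaurentPolynomial K)
  have hfg : f * g = Polynomial.X ^ (n + m) := by
    apply Polynomial.toLaurent_injective
    rw [map_mul, hf, hg, Polynomial.toLaurent_X_pow]
    calc (u : LaurentPolynomial K) * T n * (((u⁻¹ : (LaurentPolynomial K)ˣ) : LaurentPolynomial K) * T m)
        = ((u : LaurentPolynomial K) * ((u⁻¹ : (LaurentPolynomial K)ˣ) : LaurentPolynomial K)) * (T n * T m) := by ring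
      _ = _ := by rw [Units.mul_inv, one_mul, ← T_add]; push_cast; rfl
  obtain ⟨i, -, hi⟩ := (dvd_prime_pow Polynomial.prime_X _).1 (Dvd.intro _ hfg)
  obtain ⟨c, hc⟩ := hi.symm
  obtain ⟨a, ha, hac⟩ := Polynomial.isUnit_iff.1 c.isUnit
  refine ⟨ha.unit, i - n, ?_⟩
  have h1 : (u : LaurentPolynomial K) * T n = C a * T i := by
    rw [← hf, ← hc, ← hac, map_mul, Polynomial.toLaurent_X_pow, Polynomial.toLaurent_C, mul_comm]
  calc (u : LaurentPolynomial K) = (u : LaurentPolynomial K) * T n * T (-n) := by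
        rw [mul_T_assoc]; simp
    _ = _ := by rw [h1, mul_T_assoc]; rfl

/-- `K[x, x⁻¹]ˣ = Kˣ × ⟨x⟩`. -/
def laurentUnits (K : Type*) [Field K] : Kˣ × Multiplicative ℤ ≃* (LaurentPolynomial K)ˣ :=
  MulEquiv.ofBijective
    ({ toFun := fun p =>
        { val := C (p.1 : K) * T p.2.toAdd
          inv := C ((p.1⁻¹ : Kˣ) : K) * T (-p.2.toAdd)
          val_inv := by
            rw [mul_mul_mul_comm, ← map_mul, ← T_add]; simp
          inv_val := by
            rw [mul_mul_mul_comm, ← map_mul, ← T_add]; simp }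
       map_one' := by ext1; simp
       map_mul' := by
        intro p q
        ext1
        simp only [Units.val_mul, Prod.fst_mul, Prod.snd_mul, toAdd_mul, T_add, map_mul]
        ring } : Kˣ × Multiplicative ℤ →* (LaurentPolynomial K)ˣ)
    (by
      constructor
      · rintro ⟨a, n⟩ ⟨b, m⟩ h
        have h1 : (C (a : K) * T n.toAdd : LaurentPolynomial K) = C (b : K) * T m.toAdd :=
          congrArg Units.val h
        rw [← single_eq_C_mul_T, ← single_eq_C_mul_T] at h1
        have h2 := congrArg (fun p => p.coeff n.toAdd) h1
        simp only [AddMonoidAlgebra.coeff_single, Finsupp.single_apply] at h2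
        by_cases hm : m.toAdd = n.toAdd
        · simp [hm] at h2
          exact Prod.ext (Units.ext h2) (Multiplicative.toAdd.injective hm.symm)
        · simp [hm] at h2
      · intro u
        obtain ⟨a, n, h⟩ := exists_eq_C_mul_T u
        exact ⟨(a, Multiplicative.ofAdd n), Units.ext h.symm⟩)

end laurent

/-! ### Relations and universal property of the Leavitt path algebra -/

section relations

variable (K : Type*) [Field K] {V E : Type*} (s r : E → V)

theorem vtx_mul_vtx (v w : V) :
    vtx K s r v * vtx K s r w = if v = w then vtx K s r v else 0 := by
  have := RingQuot.mkAlgHom_rel K (LeavittRel.cohn (CohnRel.vtx_mul (K := K) (s := s) (r := r) v w))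
  rw [map_mul] at this
  rw [vtx, vtx, this]
  split_ifs <;> simp

theorem vtx_mul_self (v : V) : vtx K s r v * vtx K s r v = vtx K s r v := by
  simp [vtx_mul_vtx]

theorem vtx_mul_of_ne {v w : V} (h : v ≠ w) : vtx K s r v * vtx K s r w = 0 := by
  simp [vtx_mul_vtx, h]

theorem src_mul_edg (e : E) : vtx K s r (s e) * edg K s r e = edg K s r e := by
  simpa [vtx, edg, gh] using RingQuot.mkAlgHom_rel K (LeavittRel.cohn (CohnRel.edge_src (K := K) (s := s) (r := r) e))

theorem edg_mul_rng (e : E) : edg K s r e * vtx K s r (r e) = edg K s r e := by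
  simpa [vtx, edg, gh] using RingQuot.mkAlgHom_rel K (LeavittRel.cohn (CohnRel.edge_rng (K := K) (s := s) (r := r) e))

theorem rng_mul_gh (e : E) : vtx K s r (r e) * gh K s r e = gh K s r e := by
  simpa [vtx, edg, gh] using RingQuot.mkAlgHom_rel K (LeavittRel.cohn (CohnRel.ghost_rng (K := K) (s := s) (r := r) e))

theorem gh_mul_src (e : E) : gh K s r e * vtx K s r (s e) = gh K s r e := by
  simpa [vtx, edg, gh] using RingQuot.mkAlgHom_rel K (LeavittRel.cohn (CohnRel.ghost_src (K := K) (s := s) (r := r) e))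

theorem gh_mul_edg (e f : E) :
    gh K s r e * edg K s r f = if e = f then vtx K s r (r e) else 0 := by
  have := RingQuot.mkAlgHom_rel K (LeavittRel.cohn (CohnRel.ck1 (K := K) (s := s) (r := r) e f))
  rw [map_mul] at this
  rw [gh, edg, this]
  split_ifs <;> simp [vtx]

theorem gh_mul_edg_self (e : E) : gh K s r e * edg K s r e = vtx K s r (r e) := by
  simp [gh_mul_edg]

theorem gh_mul_edg_of_ne {e f : E} (h : e ≠ f) : gh K s r e * edg K s r f = 0 := by
  simp [gh_mul_edg, h]

theorem one_eq_sum [Fintype V] : (1 : LeavittPathAlgebra K s r) = ∑ v, vtx K s r v := by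
  simpa [vtx, edg, gh] using RingQuot.mkAlgHom_rel K (LeavittRel.cohn (CohnRel.unit (K := K) (s := s) (r := r)))

theorem vtx_eq_sum (v : V) (hfin : {e : E | s e = v}.Finite) (hne : {e : E | s e = v}.Nonempty) :
    vtx K s r v = ∑ e ∈ hfin.toFinset, edg K s r e * gh K s r e := by
  simpa [vtx, edg, gh] using RingQuot.mkAlgHom_rel K (LeavittRel.ck2 (K := K) (s := s) (r := r) v hfin hne)

theorem vtx_mul_edg_of_ne {v : V} {e : E} (h : v ≠ s e) : vtx K s r v * edg K s r e = 0 := by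
  rw [← src_mul_edg, ← mul_assoc, vtx_mul_of_ne K s r h, zero_mul]

theorem edg_mul_vtx_of_ne {v : V} {e : E} (h : r e ≠ v) : edg K s r e * vtx K s r v = 0 := by
  rw [← edg_mul_rng, mul_assoc, vtx_mul_of_ne K s r h, mul_zero]

theorem vtx_mul_gh_of_ne {v : V} {e : E} (h : v ≠ r e) : vtx K s r v * gh K s r e = 0 := by
  rw [← rng_mul_gh, ← mul_assoc, vtx_mul_of_ne K s r h, zero_mul]

theorem gh_mul_vtx_of_ne {v : V} {e : E} (h : s e ≠ v) : gh K s r e * vtx K s r v = 0 := by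
  rw [← gh_mul_src, mul_assoc, vtx_mul_of_ne K s r h, mul_zero]

/-- The universal property of `L_K(E)` for a graph with finitely many vertices: a family of
elements of a `K`-algebra satisfying the defining relations induces an algebra homomorphism. -/
theorem exists_hom [Fintype V] {A : Type*} [Ring A] [Algebra K A] (P : V → A) (Q Q' : E → A)
    (hP : ∀ v w, P v * P w = if v = w then P v else 0)
    (hsQ : ∀ e, P (s e) * Q e = Q e) (hQr : ∀ e, Q e * P (r e) = Q e)
    (hrQ' : ∀ e, P (r e) * Q' e = Q' e) (hQ's : ∀ e, Q' e * P (s e) = Q' e)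
    (hck1 : ∀ e f, Q' e * Q f = if e = f then P (r e) else 0)
    (hone : 1 = ∑ v, P v)
    (hck2 : ∀ v (hfin : {e : E | s e = v}.Finite), {e : E | s e = v}.Nonempty →
      P v = ∑ e ∈ hfin.toFinset, Q e * Q' e) :
    ∃ F : LeavittPathAlgebra K s r →ₐ[K] A,
      (∀ v, F (vtx K s r v) = P v) ∧ (∀ e, F (edg K s r e) = Q e) ∧
        ∀ e, F (gh K s r e) = Q' e := by
  let f : FreeAlgebra K (Gen V E) →ₐ[K] A := FreeAlgebra.lift K fun g =>
    match g with
    | Gen.vertex v => P v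
    | Gen.edge e => Q e
    | Gen.ghost e => Q' e
  have fP (v) : f (FreeAlgebra.ι K (Gen.vertex v)) = P v := by simp [f]
  have fQ (v) : f (FreeAlgebra.ι K (Gen.edge v)) = Q v := by simp [f]
  have fQ' (v) : f (FreeAlgebra.ι K (Gen.ghost v)) = Q' v := by simp [f]
  have hf : ∀ ⦃x y⦄, LeavittRel K s r x y → f x = f y := by
    intro x y h
    cases h with
    | cohn h =>
      cases h with
      | vtx_mul v w => rw [map_mul, fP, fP, hP]; split_ifs <;> simp [fP]
      | edge_src e => rw [map_mul, fP, fQ, hsQ]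
      | edge_rng e => rw [map_mul, fP, fQ, hQr]
      | ghost_rng e => rw [map_mul, fP, fQ', hrQ']
      | ghost_src e => rw [map_mul, fP, fQ', hQ's]
      | ck1 e f => rw [map_mul, fQ, fQ', hck1]; split_ifs <;> simp [fP]
      | unit =>
        rw [map_one, map_sum, hone]
        simp only [fP]
        congr!
    | ck2 v hfin hne => simp only [map_sum, map_mul, fP, fQ, fQ']; exact hck2 v hfin hne
  refine ⟨RingQuot.liftAlgHom K ⟨f, hf⟩, fun v => ?_, fun v => ?_, fun v => ?_⟩
  · rw [vtx, RingQuot.liftAlgHom_mkAlgHom_apply, fP]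
  · rw [edg, RingQuot.liftAlgHom_mkAlgHom_apply, fQ]
  · rw [gh, RingQuot.liftAlgHom_mkAlgHom_apply, fQ']

/-- Algebra homomorphisms out of `L_K(E)` agree when they agree on vertices, edges and ghost
edges. -/
theorem hom_ext' {A : Type*} [Ring A] [Algebra K A] {F G : LeavittPathAlgebra K s r →ₐ[K] A}
    (h1 : ∀ v, F (vtx K s r v) = G (vtx K s r v)) (h2 : ∀ e, F (edg K s r e) = G (edg K s r e))
    (h3 : ∀ e, F (gh K s r e) = G (gh K s r e)) : F = G := by
  apply RingQuot.ringQuot_ext'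
  apply FreeAlgebra.hom_ext
  funext g
  cases g with
  | vertex v => exact h1 v
  | edge e => exact h2 e
  | ghost e => exact h3 e

/-- Elements of `L_K(E)` commuting with all vertices, edges and ghost edges are central. -/
theorem commute_of_gen {x : LeavittPathAlgebra K s r}
    (h1 : ∀ v, Commute x (vtx K s r v)) (h2 : ∀ e, Commute x (edg K s r e))
    (h3 : ∀ e, Commute x (gh K s r e)) (y : LeavittPathAlgebra K s r) : Commute x y := by
  obtain ⟨y, rfl⟩ := RingQuot.mkAlgHom_surjective K (LeavittRel K s r) y
  induction y using FreeAlgebra.induction with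
  | grade0 c => rw [AlgHom.commutes]; exact (Algebra.commutes c x).symm
  | grade1 g =>
    cases g with
    | vertex v => exact h1 v
    | edge e => exact h2 e
    | ghost e => exact h3 e
  | mul a b ha hb => rw [map_mul]; exact ha.mul_right hb
  | add a b ha hb => rw [map_add]; exact ha.add_right hb

end relations

end LPA

namespace LPA

/-! ### Vertices are nonzero -/

section representation

/-- The combinatorial data for an action of `L_K(E)` in which every vertex is nonzero: for a set
`X` that is infinite and at least as large as the edge set (here `X = E ⊕ ℕ`), the sets
`{e | s e = v} × X` and `X` are in bijection for every `v` that is not a sink. The map `enc e` is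
the restriction of this bijection (at `v = s e`) to the slice of `e`, and `dec v` is its inverse;
at a sink the value of `dec` is arbitrary. -/
theorem exists_encoding {V E : Type*} [Nonempty E] (s : E → V) :
    ∃ (enc : E → E ⊕ ℕ → E ⊕ ℕ) (dec : V → E ⊕ ℕ → E × (E ⊕ ℕ)),
      (∀ e x, dec (s e) (enc e x) = (e, x)) ∧
      ∀ v y, (∃ e, s e = v) → s (dec v y).1 = v ∧ enc (dec v y).1 (dec v y).2 = y := by
  have key : ∀ v, (∃ e, s e = v) → Nonempty ({e // s e = v} × (E ⊕ ℕ) ≃ E ⊕ ℕ) := by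
    rintro v ⟨e, he⟩
    have : Nonempty {e // s e = v} := ⟨⟨e, he⟩⟩
    refine Cardinal.eq.1 ?_
    rw [← Cardinal.mul_def]
    refine Cardinal.mul_eq_right (Cardinal.aleph0_le_mk _) ?_ (Cardinal.mk_ne_zero _)
    exact Cardinal.mk_le_of_injective (f := fun e : {e // s e = v} => (Sum.inl e.1 : E ⊕ ℕ))
      (fun a b h => Subtype.ext (Sum.inl_injective h))
  let φ : ∀ v, (∃ e, s e = v) → ({e // s e = v} × (E ⊕ ℕ) ≃ E ⊕ ℕ) := fun v h => (key v h).some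
  refine ⟨fun e x => φ (s e) ⟨e, rfl⟩ (⟨e, rfl⟩, x), fun v y =>
    if h : ∃ e, s e = v then (((φ v h).symm y).1.1, ((φ v h).symm y).2)
      else (Classical.arbitrary E, y), ?_, ?_⟩
  · intro e x
    have h : ∃ f, s f = s e := ⟨e, rfl⟩
    simp [h]
  · intro v y h
    have aux : ∀ (q : E × (E ⊕ ℕ)) (p : {e // s e = v} × (E ⊕ ℕ)), q = (p.1.1, p.2) →
        s q.1 = v ∧ φ (s q.1) ⟨q.1, rfl⟩ (⟨q.1, rfl⟩, q.2) = φ v h p := by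
      rintro _ ⟨⟨e, rfl⟩, x⟩ rfl
      exact ⟨rfl, rfl⟩
    simpa using aux _ ((φ v h).symm y) (dif_pos h)

/-- Vertices are nonzero in `L_K(E)`: the algebra acts on functions `V × X → K`, with `v` acting
as the projection onto the functions supported on `{v} × X` and `e, e^*` as the partial
isometries given by the bijections of `exists_encoding`. -/
theorem vtx_ne_zero (K : Type*) [Field K] {V E : Type*} [Fintype V] [Nonempty E] (s r : E → V)
    (v : V) : vtx K s r v ≠ 0 := by
  obtain ⟨enc, dec, h1, h2⟩ := exists_encoding s
  let P : V → Module.End K (V × (E ⊕ ℕ) → K) := fun v =>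
    { toFun := fun g p => if p.1 = v then g p else 0
      map_add' := fun g h => by ext p; simp only [Pi.add_apply]; split_ifs <;> simp
      map_smul' := fun c g => by ext p; simp }
  let Q : E → Module.End K (V × (E ⊕ ℕ) → K) := fun e =>
    { toFun := fun g p => if p.1 = s e ∧ (dec p.1 p.2).1 = e then g (r e, (dec p.1 p.2).2) else 0
      map_add' := fun g h => by ext p; simp only [Pi.add_apply]; split_ifs <;> simp
      map_smul' := fun c g => by ext p; simp }
  let Q' : E → Module.End K (V × (E ⊕ ℕ) → K) := fun e =>
    { toFun := fun g p => if p.1 = r e then g (s e, enc e p.2) else 0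
      map_add' := fun g h => by ext p; simp only [Pi.add_apply]; split_ifs <;> simp
      map_smul' := fun c g => by ext p; simp }
  have hP (v g p) : P v g p = if p.1 = v then g p else 0 := rfl
  have hQ (e g p) : Q e g p =
    if p.1 = s e ∧ (dec p.1 p.2).1 = e then g (r e, (dec p.1 p.2).2) else 0 := rfl
  have hQ' (e g p) : Q' e g p = if p.1 = r e then g (s e, enc e p.2) else 0 := rfl
  obtain ⟨F, hF, -, -⟩ := exists_hom K s r P Q Q'
    (by
      intro v w
      refine LinearMap.ext fun g => funext fun p => ?_
      rw [Module.End.mul_apply, hP, hP]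
      by_cases hvw : v = w
      · subst hvw; simp only [if_true, hP]; split_ifs <;> rfl
      · simp only [hvw, if_false, LinearMap.zero_apply]
        split_ifs with ha hb
        · exact absurd (ha.symm.trans hb) hvw
        · rfl
        · rfl)
    (by
      intro e
      refine LinearMap.ext fun g => funext fun p => ?_
      rw [Module.End.mul_apply, hP, hQ]
      split_ifs <;> tauto)
    (by
      intro e
      refine LinearMap.ext fun g => funext fun p => ?_
      rw [Module.End.mul_apply, hQ, hQ, hP]
      simp)
    (by
      intro e
      refine LinearMap.ext fun g => funext fun p => ?_
      rw [Module.End.mul_apply, hP, hQ']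
      split_ifs <;> rfl)
    (by
      intro e
      refine LinearMap.ext fun g => funext fun p => ?_
      rw [Module.End.mul_apply, hQ', hQ', hP]
      simp)
    (by
      intro e f
      refine LinearMap.ext fun g => funext fun p => ?_
      rw [Module.End.mul_apply, hQ', hQ]
      simp only [h1]
      by_cases hef : e = f
      · subst hef
        simp only [and_self, if_true, hP]
        split_ifs with h
        · rw [← h]
        · rfl
      · simp [hef])
    (by
      refine LinearMap.ext fun g => funext fun p => ?_
      simp [hP])
    (by
      intro v hfin hne
      refine LinearMap.ext fun g => funext fun p => ?_
      rw [LinearMap.sum_apply, Finset.sum_apply]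
      simp only [Module.End.mul_apply, hP, hQ, hQ', if_true]
      split_ifs with hv
      · obtain ⟨w, y⟩ := p
        simp only at hv
        subst hv
        obtain ⟨h3, h4⟩ := h2 w y hne
        rw [Finset.sum_eq_single (dec w y).1]
        · simp only [h3, h4, and_self, if_true]
        · intro f _ hf
          rw [if_neg]
          exact fun h => hf h.2.symm
        · intro h
          simp [h3] at h
      · symm
        refine Finset.sum_eq_zero fun e he => if_neg fun h => hv ?_
        rw [h.1]
        simpa using he)
  intro h0
  have h3 : P v = 0 := by rw [← hF, h0, map_zero]
  have h4 := congrFun (LinearMap.congr_fun h3 (fun _ => 1)) (v, Sum.inr 0)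
  rw [hP] at h4
  simp at h4

end representation

/-! ### Noncommuting units -/

section noncommuting

/-- If units commute, then so do square-zero elements `x, y`, as `1 + x` and `1 + y` are units. -/
theorem mul_comm_of_sq_zero {R : Type*} [Ring R] (h : ∀ x y : Rˣ, x * y = y * x) {x y : R}
    (hx : x * x = 0) (hy : y * y = 0) : x * y = y * x := by
  let u : ∀ z : R, z * z = 0 → Rˣ := fun z hz =>
    ⟨1 + z, 1 - z, by simp [mul_sub, add_mul, hz],
      by simp [mul_add, sub_mul, hz]⟩
  have h1 : (1 + x) * (1 + y) = (1 + y) * (1 + x) := congrArg Units.val (h (u x hx) (u y hy))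
  have h2 : (1 + x) * (1 + y) - (1 + y) * (1 + x) = x * y - y * x := by noncomm_ring
  rw [h1, sub_self] at h2
  exact (sub_eq_zero.1 h2.symm)

variable (K : Type*) [Field K] {V E : Type*} [Fintype V] (s r : E → V)

/-- An edge `e` that is not a loop gives noncommuting units `1 + e` and `1 + e^*`. -/
theorem src_eq_rng_of_units (h : ∀ x y : (LeavittPathAlgebra K s r)ˣ, x * y = y * x) (e : E) :
    s e = r e := by
  have : Nonempty E := ⟨e⟩
  by_contra hne
  have h1 : edg K s r e * edg K s r e = 0 := by
    rw [← src_mul_edg, ← mul_assoc, mul_assoc _ (edg K s r e) (vtx K s r (s e)),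
      edg_mul_vtx_of_ne K s r (Ne.symm hne), mul_zero, zero_mul]
  have h2 : gh K s r e * gh K s r e = 0 := by
    rw [← rng_mul_gh, ← mul_assoc, mul_assoc _ (gh K s r e) (vtx K s r (r e)),
      gh_mul_vtx_of_ne K s r hne, mul_zero, zero_mul]
  have h3 := mul_comm_of_sq_zero h h1 h2
  rw [gh_mul_edg_self] at h3
  apply vtx_ne_zero K s r (r e)
  calc vtx K s r (r e) = vtx K s r (r e) * vtx K s r (r e) := (vtx_mul_self K s r _).symm
    _ = vtx K s r (r e) * (edg K s r e * gh K s r e) := by rw [h3]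
    _ = 0 := by rw [← mul_assoc, vtx_mul_edg_of_ne K s r (Ne.symm hne), zero_mul]

/-- Distinct edges `e, f` with the same source and the same range give noncommuting units
`1 + e f^*` and `1 + f e^*`. -/
theorem eq_of_units (h : ∀ x y : (LeavittPathAlgebra K s r)ˣ, x * y = y * x) {e f : E}
    (hr : r e = r f) : e = f := by
  have : Nonempty E := ⟨e⟩
  by_contra hne
  have h1 : ∀ a b : E, a ≠ b → edg K s r a * gh K s r b * (edg K s r a * gh K s r b) = 0 := by
    intro a b hab
    rw [mul_assoc, ← mul_assoc (gh K s r b), gh_mul_edg_of_ne K s r (Ne.symm hab), zero_mul,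
      mul_zero]
  have h2 : ∀ a b : E, r a = r b → edg K s r a * gh K s r b * (edg K s r b * gh K s r a) =
      edg K s r a * gh K s r a := by
    intro a b hab
    rw [mul_assoc, ← mul_assoc (gh K s r b), gh_mul_edg_self, ← hab, rng_mul_gh]
  have h3 := mul_comm_of_sq_zero h (h1 e f hne) (h1 f e (Ne.symm hne))
  rw [h2 e f hr, h2 f e hr.symm] at h3
  apply vtx_ne_zero K s r (r e)
  calc vtx K s r (r e) = gh K s r e * (edg K s r e * gh K s r e) * edg K s r e := by
        rw [← mul_assoc, gh_mul_edg_self, rng_mul_gh, gh_mul_edg_self]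
    _ = gh K s r e * (edg K s r f * gh K s r f) * edg K s r e := by rw [h3]
    _ = 0 := by rw [← mul_assoc, gh_mul_edg_of_ne K s r hne, zero_mul, zero_mul]

end noncommuting

end LPA

namespace LPA

/-! ### Disjoint unions of isolated vertices and loops -/

section loops

open LaurentPolynomial

variable (K : Type*) [Field K] {V E : Type*} (s : E → V)

/-- If every edge is a loop and no vertex carries two loops, then `L_K(E)` is commutative. -/
theorem commute_of_loops (hs : Function.Injective s) (x y : LeavittPathAlgebra K s s) :
    Commute x y := by
  have heg : ∀ e, edg K s s e * gh K s s e = vtx K s s (s e) := by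
    intro e
    have hset : {f : E | s f = s e} = {e} := by
      ext f
      exact hs.eq_iff
    have hfin : {f : E | s f = s e}.Finite := hset ▸ Set.finite_singleton e
    rw [vtx_eq_sum K s s (s e) hfin ⟨e, rfl⟩]
    have : hfin.toFinset = {e} := by ext f; simp [hs.eq_iff]
    rw [this, Finset.sum_singleton]
  have hvv : ∀ v w, Commute (vtx K s s v) (vtx K s s w) := by
    intro v w
    by_cases h : v = w
    · rw [h]
    · rw [Commute, SemiconjBy, vtx_mul_of_ne K s s h, vtx_mul_of_ne K s s (Ne.symm h)]
  have hve : ∀ v e, Commute (vtx K s s v) (edg K s s e) := by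
    intro v e
    by_cases h : v = s e
    · rw [h, Commute, SemiconjBy, src_mul_edg, edg_mul_rng]
    · rw [Commute, SemiconjBy, vtx_mul_edg_of_ne K s s h, edg_mul_vtx_of_ne K s s (Ne.symm h)]
  have hvg : ∀ v e, Commute (vtx K s s v) (gh K s s e) := by
    intro v e
    by_cases h : v = s e
    · rw [h, Commute, SemiconjBy, gh_mul_src, rng_mul_gh]
    · rw [Commute, SemiconjBy, vtx_mul_gh_of_ne K s s h, gh_mul_vtx_of_ne K s s (Ne.symm h)]
  have hee : ∀ e f, Commute (edg K s s e) (edg K s s f) := by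
    have aux : ∀ e f, e ≠ f → edg K s s e * edg K s s f = 0 := fun e f h => by
      rw [← edg_mul_rng, mul_assoc, vtx_mul_edg_of_ne K s s (hs.ne h), mul_zero]
    intro e f
    by_cases h : e = f
    · rw [h]
    · rw [Commute, SemiconjBy, aux e f h, aux f e (Ne.symm h)]
  have hgg : ∀ e f, Commute (gh K s s e) (gh K s s f) := by
    have aux : ∀ e f, e ≠ f → gh K s s e * gh K s s f = 0 := fun e f h => by
      rw [← gh_mul_src, mul_assoc, vtx_mul_gh_of_ne K s s (hs.ne h), mul_zero]
    intro e f
    by_cases h : e = f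
    · rw [h]
    · rw [Commute, SemiconjBy, aux e f h, aux f e (Ne.symm h)]
  have heg' : ∀ e f, Commute (edg K s s e) (gh K s s f) := by
    intro e f
    by_cases h : e = f
    · rw [h, Commute, SemiconjBy, heg, gh_mul_edg_self]
    · rw [Commute, SemiconjBy, gh_mul_edg_of_ne K s s (Ne.symm h), ← edg_mul_rng, mul_assoc,
        vtx_mul_gh_of_ne K s s (hs.ne h), mul_zero]
  exact commute_of_gen K s s
    (fun v => (commute_of_gen K s s (hvv v) (hve v) (hvg v) x).symm)
    (fun e => (commute_of_gen K s s (fun v => (hve v e).symm) (hee e) (heg' e) x).symm)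
    (fun e => (commute_of_gen K s s (fun v => (hvg v e).symm) (fun f => (heg' f e).symm)
      (hgg e) x).symm) y

/-- If every edge is a loop and no vertex carries two loops, then `L_K(E)` is the product of
copies of `K`, one for each sink, and of copies of `K[x, x⁻¹]`, one for each loop. The loop `e`
goes to `x` in its own factor. The inverse sends `x` in the factor of `e` to `e`, that is, to the
corner at `s e` of the unit `e + (1 - s e)`. -/
theorem exists_algEquiv [Fintype V] [Fintype E] (hs : Function.Injective s) :
    Nonempty (LeavittPathAlgebra K s s ≃ₐ[K]
      (({v // ∀ e, s e ≠ v} → K) × (E → LaurentPolynomial K))) := by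
  have hc : ∀ x y : LeavittPathAlgebra K s s, x * y = y * x := fun x y =>
    commute_of_loops K s hs x y
  have heg : ∀ e, edg K s s e * gh K s s e = vtx K s s (s e) := by
    intro e
    rw [hc, gh_mul_edg_self]
  have hT : (T (-1) * T 1 : LaurentPolynomial K) = 1 := by rw [← T_add]; simp
  have hT' : (T 1 * T (-1) : LaurentPolynomial K) = 1 := by rw [← T_add]; simp
  obtain ⟨F, FP, FQ, FQ'⟩ := exists_hom K s s
    (A := ({v // ∀ e, s e ≠ v} → K) × (E → LaurentPolynomial K))
    (fun v => (fun w => if w.1 = v then 1 else 0, fun e => if s e = v then 1 else 0))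
    (fun e => (0, fun f => if f = e then T 1 else 0))
    (fun e => (0, fun f => if f = e then T (-1) else 0))
    (by
      intro v w
      by_cases h : v = w
      · subst h
        simp only [if_true]
        refine Prod.ext (funext fun x => ?_) (funext fun x => ?_)
        · by_cases h : x.1 = v <;> simp [h]
        · by_cases h : s x = v <;> simp [h]
      · have h1 : ∀ x : V, ¬ (x = w ∧ x = v) := fun x hx => h (hx.2.symm.trans hx.1)
        simp only [h, if_false]
        refine Prod.ext (funext fun x => ?_) (funext fun x => ?_) <;>
        simp [← ite_and, h1])
    (by
      intro e
      refine Prod.ext (by simp) (funext fun x => ?_)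
      by_cases h : x = e <;> simp [h])
    (by
      intro e
      refine Prod.ext (by simp) (funext fun x => ?_)
      by_cases h : x = e <;> simp [h])
    (by
      intro e
      refine Prod.ext (by simp) (funext fun x => ?_)
      by_cases h : x = e <;> simp [h])
    (by
      intro e
      refine Prod.ext (by simp) (funext fun x => ?_)
      by_cases h : x = e <;> simp [h])
    (by
      intro e f
      by_cases h : e = f
      · subst h
        refine Prod.ext (funext fun w => ?_) (funext fun x => ?_)
        · simp [(w.2 e).symm]
        · by_cases h : x = e <;> simp [h, hs.eq_iff, hT]
      · refine Prod.ext (by simp [h]) (funext fun x => ?_)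
        by_cases h1 : x = e <;> simp [h, h1])
    (by
      refine Prod.ext (funext fun w => ?_) (funext fun x => ?_) <;>
      simp [Prod.fst_sum, Prod.snd_sum])
    (by
      rintro v hfin ⟨e, rfl⟩
      have h : hfin.toFinset = {e} := by ext f; simp [hs.eq_iff]
      rw [h, Finset.sum_singleton]
      refine Prod.ext (funext fun w => ?_) (funext fun x => ?_)
      · simp [(w.2 e).symm]
      · by_cases h : x = e <;> simp [h, hs.eq_iff, hT'])
  -- The unit of `L_K(E)` that is `e` at the vertex `s e` and trivial at the other vertices.
  let u : E → (LeavittPathAlgebra K s s)ˣ := fun e =>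
    { val := edg K s s e + (1 - vtx K s s (s e))
      inv := gh K s s e + (1 - vtx K s s (s e))
      val_inv := by
        simp only [add_mul, mul_add, mul_sub, sub_mul, mul_one, one_mul, heg, edg_mul_rng,
          rng_mul_gh, vtx_mul_self]
        abel
      inv_val := by
        simp only [add_mul, mul_add, mul_sub, sub_mul, mul_one, one_mul, gh_mul_edg_self,
          gh_mul_src, src_mul_edg, vtx_mul_self]
        abel }
  let ψ : E → LaurentPolynomial K →ₐ[K] LeavittPathAlgebra K s s := fun e =>
    AddMonoidAlgebra.lift K _ ℤ ((Units.coeHom _).comp (zpowersHom _ (u e)))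
  have ψT : ∀ e n, ψ e (T n) = ((u e ^ n : (LeavittPathAlgebra K s s)ˣ) : LeavittPathAlgebra K s s) := by
    intro e n
    rw [T, AddMonoidAlgebra.lift_single]
    simp
  let B₀ : (({v // ∀ e, s e ≠ v} → K) × (E → LaurentPolynomial K)) →ₗ[K]
      LeavittPathAlgebra K s s :=
    { toFun := fun p => ∑ w, p.1 w • vtx K s s w.1 + ∑ e, vtx K s s (s e) * ψ e (p.2 e)
      map_add' := by
        intro p q
        simp only [Prod.fst_add, Prod.snd_add, Pi.add_apply, map_add, add_smul, mul_add,
          Finset.sum_add_distrib]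
        abel
      map_smul' := by
        intro c p
        simp [smul_smul, Finset.smul_sum] }
  have hB₀ : ∀ p, B₀ p = ∑ w, p.1 w • vtx K s s w.1 + ∑ e, vtx K s s (s e) * ψ e (p.2 e) :=
    fun p => rfl
  have hsink : ∀ (w : {v // ∀ e, s e ≠ v}) p, vtx K s s w.1 * B₀ p = p.1 w • vtx K s s w.1 := by
    intro w p
    rw [hB₀, mul_add, Finset.mul_sum, Finset.mul_sum, Finset.sum_eq_single w,
      Finset.sum_eq_zero, add_zero, mul_smul_comm, vtx_mul_self]
    · intro e _
      rw [← mul_assoc, vtx_mul_of_ne K s s (w.2 e).symm, zero_mul]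
    · intro w' _ h
      rw [mul_smul_comm, vtx_mul_of_ne K s s (fun h' => h (Subtype.ext h'.symm)), smul_zero]
    · simp
  have hloop : ∀ e p, vtx K s s (s e) * B₀ p = vtx K s s (s e) * ψ e (p.2 e) := by
    intro e p
    rw [hB₀, mul_add, Finset.mul_sum, Finset.mul_sum, Finset.sum_eq_zero, zero_add,
      Finset.sum_eq_single e, ← mul_assoc, vtx_mul_self]
    · intro f _ h
      rw [← mul_assoc, vtx_mul_of_ne K s s (hs.ne (Ne.symm h)), zero_mul]
    · simp
    · intro w _
      rw [mul_smul_comm, vtx_mul_of_ne K s s (w.2 e), smul_zero]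
  -- As `1` is the sum of the vertices, an equality may be checked after multiplication by each.
  have hloc : ∀ x y : LeavittPathAlgebra K s s,
      (∀ w : {v // ∀ e, s e ≠ v}, vtx K s s w.1 * x = vtx K s s w.1 * y) →
      (∀ e, vtx K s s (s e) * x = vtx K s s (s e) * y) → x = y := by
    intro x y h1 h2
    rw [← one_mul x, ← one_mul y, one_eq_sum, Finset.sum_mul, Finset.sum_mul]
    refine Finset.sum_congr rfl fun v _ => ?_
    by_cases h : ∃ e, s e = v
    · obtain ⟨e, rfl⟩ := h
      exact h2 e
    · exact h1 ⟨v, not_exists.1 h⟩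
  have hidem : ∀ v x y, vtx K s s v * (x * y) = (vtx K s s v * x) * (vtx K s s v * y) := by
    intro v x y
    rw [mul_assoc (vtx K s s v) x, ← mul_assoc x (vtx K s s v) y, hc x (vtx K s s v),
      mul_assoc (vtx K s s v) x y, ← mul_assoc (vtx K s s v) (vtx K s s v), vtx_mul_self]
  let B : (({v // ∀ e, s e ≠ v} → K) × (E → LaurentPolynomial K)) →ₐ[K]
      LeavittPathAlgebra K s s := AlgHom.ofLinearMap B₀
    (hloc _ _ (fun w => by rw [hsink]; simp) (fun e => by rw [hloop]; simp))
    (fun p q => hloc _ _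
      (fun w => by
        rw [hidem, hsink, hsink, hsink, smul_mul_smul_comm, vtx_mul_self]; rfl)
      (fun e => by rw [hidem, hloop, hloop, hloop, ← hidem, ← map_mul]; rfl))
  have hB : ∀ p, B p = B₀ p := fun p => rfl
  let G : E → LeavittPathAlgebra K s s →ₐ[K] LaurentPolynomial K := fun e =>
    (Pi.evalAlgHom K (fun _ => LaurentPolynomial K) e).comp ((AlgHom.snd K _ _).comp F)
  have hG : ∀ e x, G e x = (F x).2 e := fun e x => rfl
  have hGu : ∀ e, Units.map (G e : LeavittPathAlgebra K s s →* LaurentPolynomial K) (u e) =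
      laurentUnits K (1, Multiplicative.ofAdd 1) := by
    intro e
    ext1
    change G e (edg K s s e + (1 - vtx K s s (s e))) = C ((1 : Kˣ) : K) * T 1
    rw [map_add, map_sub, map_one, hG, hG, FQ, FP]
    simp
  have hGψ : ∀ e, (G e).comp (ψ e) = AlgHom.id K _ := by
    intro e
    refine AddMonoidAlgebra.algHom_ext' (MonoidHom.ext fun n => ?_) (Subsingleton.elim _ _)
    change G e (ψ e (T n.toAdd)) = T n.toAdd
    rw [ψT]
    change ((Units.map (G e : LeavittPathAlgebra K s s →* LaurentPolynomial K) (u e ^ n.toAdd) :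
      (LaurentPolynomial K)ˣ) : LaurentPolynomial K) = T n.toAdd
    rw [map_zpow, hGu, ← map_zpow]
    change C (((1 : Kˣ) ^ n.toAdd : Kˣ) : K) * T (Multiplicative.ofAdd (1 : ℤ) ^ n.toAdd).toAdd = _
    simp
  refine ⟨AlgEquiv.ofAlgHom F B ?_ ?_⟩
  · refine AlgHom.ext fun p => Prod.ext (funext fun w => ?_) (funext fun e => ?_)
    · have h : (F (vtx K s s w.1 * B p)).1 w = (F (B p)).1 w := by
        rw [map_mul, FP]; simp
      change (F (B p)).1 w = p.1 w
      rw [← h, hB, hsink, map_smul, FP]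
      simp
    · have h : ∀ x, (F (vtx K s s (s e) * x)).2 e = (F x).2 e := by
        intro x
        rw [map_mul, FP]; simp
      change (F (B p)).2 e = p.2 e
      rw [← h, hB, hloop, h]
      exact AlgHom.congr_fun (hGψ e) (p.2 e)
  · refine hom_ext' K s s (fun v => ?_) (fun f => ?_) (fun f => ?_)
    · change B (F (vtx K s s v)) = vtx K s s v
      refine hloc _ _ (fun w => ?_) (fun e => ?_)
      · rw [hB, hsink, FP, vtx_mul_vtx]
        simp
      · rw [hB, hloop, FP, vtx_mul_vtx]
        by_cases h : s e = v <;> simp [h]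
    · change B (F (edg K s s f)) = edg K s s f
      refine hloc _ _ (fun w => ?_) (fun e => ?_)
      · rw [hB, hsink, FQ, vtx_mul_edg_of_ne K s s (w.2 f).symm]
        simp
      · rw [hB, hloop, FQ]
        by_cases h : e = f
        · subst h
          simp only [if_true, ψT, zpow_one]
          simp [u, mul_add, mul_sub, vtx_mul_self]
        · rw [vtx_mul_edg_of_ne K s s (hs.ne h)]
          simp [h]
    · change B (F (gh K s s f)) = gh K s s f
      refine hloc _ _ (fun w => ?_) (fun e => ?_)
      · rw [hB, hsink, FQ', vtx_mul_gh_of_ne K s s (w.2 f).symm]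
        simp
      · rw [hB, hloop, FQ']
        by_cases h : e = f
        · subst h
          simp only [if_true, ψT, zpow_neg, zpow_one]
          simp [u, mul_add, mul_sub, vtx_mul_self]
        · rw [vtx_mul_gh_of_ne K s s (hs.ne h)]
          simp [h]

end loops

end LPA

/-- characterizations of commutative unital Leavitt path algebras. -/
theorem stmt17 (K V E : Type*) [Field K] [Fintype V] (s r : E → V) :
    List.TFAE
      [ ∀ x y : LPA.LeavittPathAlgebra K s r, x * y = y * x,
        r = s ∧ Function.Injective s,
        (∀ e : E, s e = r e) ∧ ∀ e f : E, s e = s f → e = f,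
        ∃ n m : ℕ, n + m = Fintype.card V ∧
          Nonempty (LPA.LeavittPathAlgebra K s r ≃ₐ[K]
            ((Fin n → K) × (Fin m → LaurentPolynomial K))),
        ∃ n m : ℕ, n + m = Fintype.card V ∧
          Nonempty ((LPA.LeavittPathAlgebra K s r)ˣ ≃*
            ((Fin n → Kˣ) × (Fin m → Kˣ × Multiplicative ℤ))),
        ∀ x y : (LPA.LeavittPathAlgebra K s r)ˣ, x * y = y * x ] := by
  tfae_have 1 → 6 := fun h x y => Units.ext (h x y)
  tfae_have 6 → 2 := fun h =>
    have hsr : s = r := funext (LPA.src_eq_rng_of_units K s r h)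
    ⟨hsr.symm, fun e f hef => LPA.eq_of_units K s r h (hsr ▸ hef)⟩
  tfae_have 2 ↔ 3 :=
    ⟨fun h => ⟨fun e => (congrFun h.1 e).symm, fun _ _ hef => h.2 hef⟩,
      fun h => ⟨(funext h.1).symm, fun _ _ hef => h.2 _ _ hef⟩⟩
  tfae_have 2 → 4 := by
    rintro ⟨rfl, hs⟩
    have : Finite E := Finite.of_injective r hs
    have : Fintype E := Fintype.ofFinite E
    obtain ⟨Φ⟩ := LPA.exists_algEquiv K r hs
    refine ⟨Fintype.card {v // ∀ e, r e ≠ v}, Fintype.card E, ?_, ⟨Φ.trans ?_⟩⟩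
    · have h1 : Fintype.card E = Fintype.card {v // ¬ ∀ e, r e ≠ v} :=
        Fintype.card_congr ((Equiv.ofInjective r hs).trans
          (Equiv.subtypeEquivRight fun v => by simp))
      rw [h1]
      rw [← Fintype.card_sum]
      exact Fintype.card_congr (Equiv.sumCompl _)
    · exact AlgEquiv.prodCongr
        (AlgEquiv.piCongrLeft K (fun _ => K) (Fintype.equivFin _))
        (AlgEquiv.piCongrLeft K (fun _ => LaurentPolynomial K) (Fintype.equivFin _))
  tfae_have 4 → 5 := by
    rintro ⟨n, m, hnm, ⟨Φ⟩⟩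
    refine ⟨n, m, hnm, ⟨(Units.mapEquiv Φ.toMulEquiv).trans (MulEquiv.prodUnits.trans
      (MulEquiv.prodCongr MulEquiv.piUnits (MulEquiv.piUnits.trans ?_)))⟩⟩
    exact MulEquiv.piCongrRight fun _ => (LPA.laurentUnits K).symm
  tfae_have 5 → 6 := by
    rintro ⟨n, m, -, ⟨Φ⟩⟩ x y
    exact Φ.injective (by rw [map_mul, map_mul, mul_comm])
  tfae_have 4 → 1 := by
    rintro ⟨n, m, -, ⟨Φ⟩⟩ x y
    exact Φ.injective (by rw [map_mul, map_mul, mul_comm])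
  tfae_finish
end
end

section
/- Let K be a field. The Jacobson algebra 𝓡 = K⟨x, y | xy = 1⟩ is isomorphic as a K-algebra to the Toeplitz K-algebra 𝒯_K = L_K(E_T), via the K-algebra homomorphism determined by x ↦ e^* + f^* and y ↦ e + f. -/
/-!
The elements `e^* + f^*` and `e + f` satisfy the Jacobson relation, since the mixed products
`e^* f`, `f^* e` vanish by (CK1) and `e^* e + f^* f = u + v = 1` (`toep_gh_mul_edg`). Conversely,
in any algebra with `x y = 1` the element `p = y x` is idempotent, and
`u ↦ p`, `v ↦ 1 - p`, `e ↦ y p`, `f ↦ y (1 - p)`, `e^* ↦ p x`, `f^* ↦ (1 - p) x`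
respects the defining relations of the Leavitt path algebra of the Toeplitz graph
(`toepToJac`). The two homomorphisms are mutually inverse on generators; the key point is
`(e + f) (e^* + f^*) = e e^* + f f^* = u` (`toep_edg_mul_gh`), by (CK2) and because
`e f^* = f e^* = 0`, as `e` and `f` have different ranges.
-/

noncomputable section
open scoped Classical
universe u

/-- The defining relation `xy = 1` of the Jacobson algebra, on the free algebra over two
generators `x := ι false` and `y := ι true`. -/
inductive JacRel (K : Type*) [Field K] : FreeAlgebra K Bool → FreeAlgebra K Bool → Prop
  | xy : JacRel K (FreeAlgebra.ι K false * FreeAlgebra.ι K true) 1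

/-- The Jacobson algebra `K⟨x, y | xy = 1⟩`. -/
abbrev JacobsonAlgebra (K : Type*) [Field K] := RingQuot (JacRel K)

/-- The generator `x` of the Jacobson algebra. -/
def jacX (K : Type*) [Field K] : JacobsonAlgebra K :=
  RingQuot.mkAlgHom K (JacRel K) (FreeAlgebra.ι K false)

/-- The generator `y` of the Jacobson algebra. -/
def jacY (K : Type*) [Field K] : JacobsonAlgebra K :=
  RingQuot.mkAlgHom K (JacRel K) (FreeAlgebra.ι K true)

/-- Source map of the Toeplitz graph: vertices `u := false`, `v := true`; edges
`e := false` (a loop at `u`) and `f := true` (from `u` to `v`); both have source `u`. -/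
def toepS : Bool → Bool := fun _ => false

/-- Range map of the Toeplitz graph: `r e = u`, `r f = v`. -/
def toepR : Bool → Bool := id

section Toeplitz

open LPA

variable (K : Type*) [Field K]

/-! ### Relations in the two algebras -/

theorem jacX_mul_jacY : jacX K * jacY K = 1 := by
  simpa [jacX, jacY] using RingQuot.mkAlgHom_rel K (JacRel.xy (K := K))

theorem jacX_mul_jacY_mul (z : JacobsonAlgebra K) : jacX K * (jacY K * z) = z := by
  rw [← mul_assoc, jacX_mul_jacY, one_mul]

/-- Each Cohn relation holds between the images in the Toeplitz algebra. -/
theorem toep_cohn {a b : FreeAlgebra K (Gen Bool Bool)} (h : CohnRel K toepS toepR a b) :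
    RingQuot.mkAlgHom K (LeavittRel K toepS toepR) a =
      RingQuot.mkAlgHom K (LeavittRel K toepS toepR) b :=
  RingQuot.mkAlgHom_rel K (LeavittRel.cohn h)

theorem toep_vtx_mul (v w : Bool) :
    vtx K toepS toepR v * vtx K toepS toepR w = if v = w then vtx K toepS toepR v else 0 := by
  have h := toep_cohn K (CohnRel.vtx_mul v w)
  rw [map_mul, apply_ite (RingQuot.mkAlgHom K (LeavittRel K toepS toepR)), map_zero] at h
  convert h <;> rfl

theorem toep_ck1 (a b : Bool) :
    gh K toepS toepR a * edg K toepS toepR b = if a = b then vtx K toepS toepR a else 0 := by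
  have h := toep_cohn K (CohnRel.ck1 a b)
  rw [map_mul, apply_ite (RingQuot.mkAlgHom K (LeavittRel K toepS toepR)), map_zero] at h
  convert h <;> rfl

theorem toep_edg_vtx (a : Bool) :
    edg K toepS toepR a * vtx K toepS toepR a = edg K toepS toepR a := by
  have h := toep_cohn K (CohnRel.edge_rng (s := toepS) (r := toepR) a)
  rw [map_mul] at h
  exact h

theorem toep_vtx_gh (a : Bool) :
    vtx K toepS toepR a * gh K toepS toepR a = gh K toepS toepR a := by
  have h := toep_cohn K (CohnRel.ghost_rng (s := toepS) (r := toepR) a)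
  rw [map_mul] at h
  exact h

theorem toep_unit : vtx K toepS toepR false + vtx K toepS toepR true = 1 := by
  have h := toep_cohn K CohnRel.unit
  rw [map_one, Fintype.sum_bool, map_add, add_comm] at h
  exact h.symm

theorem toep_ck2 :
    edg K toepS toepR false * gh K toepS toepR false +
      edg K toepS toepR true * gh K toepS toepR true = vtx K toepS toepR false := by
  have hfin : {e : Bool | toepS e = false}.Finite := Set.toFinite _
  have h := RingQuot.mkAlgHom_rel K
    (LeavittRel.ck2 (K := K) (s := toepS) (r := toepR) false hfin ⟨false, rfl⟩)
  have hu : hfin.toFinset = Finset.univ := by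
    ext e
    simp [toepS]
  rw [hu, Fintype.sum_bool, map_add, map_mul, map_mul, add_comm] at h
  exact h.symm

theorem toep_edg_vtx_ne {a b : Bool} (h : a ≠ b) :
    edg K toepS toepR a * vtx K toepS toepR b = 0 := by
  rw [← toep_edg_vtx, mul_assoc, toep_vtx_mul, if_neg h, mul_zero]

theorem toep_edg_gh_ne {a b : Bool} (h : a ≠ b) :
    edg K toepS toepR a * gh K toepS toepR b = 0 := by
  rw [← toep_vtx_gh, ← mul_assoc, toep_edg_vtx_ne K h, zero_mul]

theorem toep_vtx_gh_ne {a b : Bool} (h : a ≠ b) :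
    vtx K toepS toepR a * gh K toepS toepR b = 0 := by
  rw [← toep_vtx_gh, ← mul_assoc, toep_vtx_mul, if_neg h, zero_mul]

theorem toep_gh_mul_edg :
    (gh K toepS toepR false + gh K toepS toepR true) *
      (edg K toepS toepR false + edg K toepS toepR true) = 1 := by
  simp [mul_add, add_mul, toep_ck1, toep_unit]

theorem toep_edg_mul_gh :
    (edg K toepS toepR false + edg K toepS toepR true) *
      (gh K toepS toepR false + gh K toepS toepR true) = vtx K toepS toepR false := by
  simp [mul_add, add_mul, toep_edg_gh_ne, toep_ck2]

/-! ### From the Jacobson algebra to the Toeplitz algebra -/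

/-- The homomorphism `x ↦ e^* + f^*`, `y ↦ e + f` from the Jacobson algebra to the Toeplitz
algebra. -/
def jacToToep : JacobsonAlgebra K →ₐ[K] LeavittPathAlgebra K toepS toepR :=
  RingQuot.liftAlgHom K ⟨FreeAlgebra.lift K fun b =>
      if b then edg K toepS toepR false + edg K toepS toepR true
      else gh K toepS toepR false + gh K toepS toepR true, by
    rintro _ _ ⟨⟩
    simpa using toep_gh_mul_edg K⟩

theorem jacToToep_x :
    jacToToep K (jacX K) = gh K toepS toepR false + gh K toepS toepR true := by
  simp [jacToToep, jacX]

theorem jacToToep_y :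
    jacToToep K (jacY K) = edg K toepS toepR false + edg K toepS toepR true := by
  simp [jacToToep, jacY]

/-! ### From the Toeplitz algebra to the Jacobson algebra -/

/-- The image of a vertex in the Jacobson algebra: `u ↦ y x`, `v ↦ 1 - y x`. -/
def jacVtx (b : Bool) : JacobsonAlgebra K :=
  if b then 1 - jacY K * jacX K else jacY K * jacX K

theorem jacVtx_mul (a b : Bool) :
    jacVtx K a * jacVtx K b = if a = b then jacVtx K a else 0 := by
  cases a <;> cases b <;>
    simp [jacVtx, mul_sub, sub_mul, mul_assoc, jacX_mul_jacY_mul]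

theorem jacVtx_add : jacVtx K true + jacVtx K false = 1 := by
  simp [jacVtx]

/-- The images in the Jacobson algebra of the generators of the Toeplitz algebra: with `p a` the
image of the vertex `r a`, an edge `a` goes to `y (p a)` and its ghost to `(p a) x`. -/
def toepGen : Gen Bool Bool → JacobsonAlgebra K
  | .vertex b => jacVtx K b
  | .edge b => jacY K * jacVtx K b
  | .ghost b => jacVtx K b * jacX K

/-- The images of the generators satisfy the defining relations of the Leavitt path algebra. -/
theorem toepGen_rel {a b : FreeAlgebra K (Gen Bool Bool)} (h : LeavittRel K toepS toepR a b) :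
    FreeAlgebra.lift K (toepGen K) a = FreeAlgebra.lift K (toepGen K) b := by
  rcases h with h | ⟨v, hfin, hne⟩
  · cases h with
    | vtx_mul v w =>
      rw [apply_ite (FreeAlgebra.lift K (toepGen K))]
      simp only [map_mul, FreeAlgebra.lift_ι_apply, toepGen, map_zero]
      -- The two sides differ only in the decidability instance of the `if`.
      convert jacVtx_mul K v w
    | edge_src e =>
      simp [toepGen, toepS, jacVtx, mul_assoc, jacX_mul_jacY_mul]
    | edge_rng e =>
      simp [toepGen, toepR, mul_assoc, jacVtx_mul]
    | ghost_rng e =>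
      simp [toepGen, toepR, ← mul_assoc, jacVtx_mul]
    | ghost_src e =>
      simp [toepGen, toepS, jacVtx, mul_assoc, jacX_mul_jacY_mul]
    | ck1 e f =>
      rw [apply_ite (FreeAlgebra.lift K (toepGen K))]
      simp only [map_mul, FreeAlgebra.lift_ι_apply, toepGen, toepR, id, map_zero, mul_assoc,
        jacX_mul_jacY_mul]
      convert jacVtx_mul K e f
    | @unit inst =>
      obtain rfl : inst = Bool.fintype := Subsingleton.elim _ _
      simp [toepGen, jacVtx_add]
  · -- Only `u` emits edges, and it emits both of them.
    obtain ⟨e, rfl⟩ := hne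
    have hu : hfin.toFinset = Finset.univ := by
      ext e
      simp [toepS]
    have hp (a : Bool) : jacY K * jacVtx K a * (jacVtx K a * jacX K) =
        jacY K * jacVtx K a * jacX K := by
      rw [mul_assoc, ← mul_assoc (jacVtx K a), jacVtx_mul, if_pos rfl, mul_assoc]
    simp only [hu, Fintype.sum_bool, map_add, map_mul, FreeAlgebra.lift_ι_apply, toepGen, hp]
    rw [← add_mul, ← mul_add, jacVtx_add, mul_one]
    rfl

/-- The homomorphism from the Toeplitz algebra to the Jacobson algebra given on generators by
`toepGen`. -/
def toepToJac : LeavittPathAlgebra K toepS toepR →ₐ[K] JacobsonAlgebra K :=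
  RingQuot.liftAlgHom K ⟨FreeAlgebra.lift K (toepGen K), fun _ _ h => toepGen_rel K h⟩

theorem toepToJac_mk (g : Gen Bool Bool) :
    toepToJac K (RingQuot.mkAlgHom K (LeavittRel K toepS toepR) (FreeAlgebra.ι K g)) =
      toepGen K g := by
  simp [toepToJac]

/-! ### The two homomorphisms are mutually inverse -/

theorem toepToJac_comp : (toepToJac K).comp (jacToToep K) = AlgHom.id K _ := by
  apply RingQuot.ringQuot_ext'
  ext b
  have he (b : Bool) : toepToJac K (edg K toepS toepR b) = jacY K * jacVtx K b :=
    toepToJac_mk K (.edge b)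
  have hg (b : Bool) : toepToJac K (gh K toepS toepR b) = jacVtx K b * jacX K :=
    toepToJac_mk K (.ghost b)
  cases b
  · change toepToJac K (jacToToep K (jacX K)) = jacX K
    rw [jacToToep_x, map_add, hg, hg, ← add_mul, add_comm, jacVtx_add, one_mul]
  · change toepToJac K (jacToToep K (jacY K)) = jacY K
    rw [jacToToep_y, map_add, he, he, ← mul_add, add_comm, jacVtx_add, mul_one]

theorem jacToToep_vtx (b : Bool) : jacToToep K (jacVtx K b) = vtx K toepS toepR b := by
  cases b
  · simp [jacVtx, jacToToep_x, jacToToep_y, toep_edg_mul_gh]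
  · simp [jacVtx, jacToToep_x, jacToToep_y, toep_edg_mul_gh, ← toep_unit]

theorem jacToToep_comp : (jacToToep K).comp (toepToJac K) = AlgHom.id K _ := by
  apply RingQuot.ringQuot_ext'
  ext g
  change jacToToep K (toepToJac K (RingQuot.mkAlgHom K _ (FreeAlgebra.ι K g))) =
    RingQuot.mkAlgHom K _ (FreeAlgebra.ι K g)
  rw [toepToJac_mk]
  cases g with
  | vertex b => exact jacToToep_vtx K b
  | edge b =>
    change jacToToep K (jacY K * jacVtx K b) = edg K toepS toepR b
    rw [map_mul, jacToToep_vtx, jacToToep_y]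
    cases b <;> simp [add_mul, toep_edg_vtx, toep_edg_vtx_ne]
  | ghost b =>
    change jacToToep K (jacVtx K b * jacX K) = gh K toepS toepR b
    rw [map_mul, jacToToep_vtx, jacToToep_x]
    cases b <;> simp [mul_add, toep_vtx_gh, toep_vtx_gh_ne]

end Toeplitz

/-- the Jacobson algebra is isomorphic to the Toeplitz algebra
`𝒯_K = L_K(E_T)` via `x ↦ e^* + f^*`, `y ↦ e + f`. -/
theorem stmt19 (K : Type*) [Field K] :
    ∃ φ : JacobsonAlgebra K ≃ₐ[K] LPA.LeavittPathAlgebra K toepS toepR,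
      φ (jacX K) = LPA.gh K toepS toepR false + LPA.gh K toepS toepR true ∧
      φ (jacY K) = LPA.edg K toepS toepR false + LPA.edg K toepS toepR true := by
  exact ⟨AlgEquiv.ofAlgHom (jacToToep K) (toepToJac K) (jacToToep_comp K) (toepToJac_comp K),
    jacToToep_x K, jacToToep_y K⟩
end
end
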